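/- The following series identity holds: √2 = (816/577) · Σ_{k=0}^{∞} ((1/2)_k (1/6)_k (5/6)_k / (k! (3/4)_k (5/4)_k)) · (748177108992/36902422678601089)^k, where the series on the right converges. -/

import Mathlib

/-!
Put `y = 1/332929 = 1/577²`. The argument of the series is `(27/4) * y * (1 - y)^2`, and the
coefficients are, up to the factor `(27/4)^k`, the Fuss–Catalan numbers
`v k = (1/2) / (3k + 1/2) * binom (3k + 1/2) k`. The series is therefore the Fuss–Catalan series
whose value is the power `1/2` of the root `B = 1/(1 - y)` of `B = 1 + y (1 - y)^2 B^3`, that is,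
`∑ v k * (y (1 - y)^2)^k * √(1 - y) = 1`; since `1 - y = 2 * (408/577)^2`, this is the claim.

To prove the identity for small `|y|`, expand `(1 - y)^(2k + 1/2)` by the binomial series. The
resulting double series in `y^(k + j)` converges absolutely (`summable_double`), so it may be summed
along `k + j = n`. The coefficient of `y^n` is
`∑ k ≤ n, (-1)^(n-k) * binom n k * P k` up to a constant, where `P` has degree `n - 1`: it is an
`n`-th finite difference of a polynomial of lower degree and vanishes for `n ≥ 1`
(`sum_antidiagonal_coeff`).
-/

/-- The shifted factorial (Pochhammer symbol): `(x)_0 = 1` and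
`(x)_n = x * (x+1) * ... * (x+n-1)`. -/
noncomputable def shiftedFactorial (x : ℝ) (n : ℕ) : ℝ :=
  ∏ i ∈ Finset.range n, (x + i)

open Finset

/-- The falling factorial `x (x - 1) ⋯ (x - n + 1)`. -/
noncomputable def fallFac (x : ℝ) (n : ℕ) : ℝ := ∏ i ∈ range n, (x - i)

/-- The coefficient of `z^k` in the series of the theorem. -/
noncomputable def hyperCoeff (k : ℕ) : ℝ :=
  shiftedFactorial (1/2) k * shiftedFactorial (1/6) k * shiftedFactorial (5/6) k /
    ((Nat.factorial k : ℝ) * shiftedFactorial (3/4) k * shiftedFactorial (5/4) k)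

lemma shiftedFactorial_succ (x : ℝ) (n : ℕ) :
    shiftedFactorial x (n + 1) = shiftedFactorial x n * (x + n) := by
  simp [shiftedFactorial, prod_range_succ]

lemma shiftedFactorial_pos {x : ℝ} (hx : 0 < x) (n : ℕ) : 0 < shiftedFactorial x n :=
  prod_pos fun _ _ => by positivity

lemma fallFac_add (x : ℝ) (m n : ℕ) : fallFac x (m + n) = fallFac x m * fallFac (x - m) n := by
  simp only [fallFac, prod_range_add]
  congr 1
  refine prod_congr rfl fun i _ => ?_
  push_cast
  ring

lemma shiftedFactorial_add (a : ℝ) (n m : ℕ) :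
    shiftedFactorial a (n + m) = shiftedFactorial a n * fallFac (a + n + m - 1) m := by
  simp only [shiftedFactorial, fallFac, prod_range_add]
  congr 1
  rw [← prod_range_reflect]
  refine prod_congr rfl fun i hi => ?_
  have hi := mem_range.1 hi
  rw [show m - 1 - i = m - (1 + i) by omega]
  push_cast [Nat.cast_sub (show 1 + i ≤ m by omega)]
  ring

lemma shiftedFactorial_half_three_mul (k : ℕ) :
    shiftedFactorial (1/2) (3 * k) =
      27 ^ k * (shiftedFactorial (1/2) k * shiftedFactorial (1/6) k * shiftedFactorial (5/6) k) := by
  induction k with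
  | zero => simp [shiftedFactorial]
  | succ k ih =>
    rw [show 3 * (k + 1) = 3 * k + 1 + 1 + 1 by ring]
    simp only [shiftedFactorial_succ, ih]
    push_cast
    ring

lemma shiftedFactorial_half_two_mul_add_one (k : ℕ) :
    2 * shiftedFactorial (1/2) (2 * k + 1) =
      4 ^ k * (shiftedFactorial (3/4) k * shiftedFactorial (5/4) k) := by
  induction k with
  | zero => simp [shiftedFactorial]
  | succ k ih =>
    rw [show 2 * (k + 1) + 1 = 2 * k + 1 + 1 + 1 by ring, shiftedFactorial_succ,
      shiftedFactorial_succ, ← mul_assoc, ← mul_assoc, ih]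
    simp only [shiftedFactorial_succ]
    push_cast
    ring

/-- The coefficients are Fuss–Catalan numbers:
`hyperCoeff k * (27/4)^k = (1/2) / (3k + 1/2) * binom (3k + 1/2) k`. -/
lemma hyperCoeff_mul_pow (k : ℕ) :
    hyperCoeff k * (27 / 4) ^ k * ((3 * k + 1 / 2) * k.factorial) =
      1 / 2 * fallFac (3 * k + 1 / 2) k := by
  have h1 := shiftedFactorial_add (1/2) (2 * k + 1) k
  rw [show 2 * k + 1 + k = 3 * k + 1 by ring, shiftedFactorial_succ,
    shiftedFactorial_half_three_mul] at h1
  have h2 := shiftedFactorial_half_two_mul_add_one k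
  have e : (1 / 2 + ((2 * k + 1 : ℕ) : ℝ) + k - 1) = 3 * k + 1 / 2 := by push_cast; ring
  rw [e] at h1
  push_cast at h1
  have p3 := shiftedFactorial_pos (show (0 : ℝ) < 3 / 4 by norm_num) k
  have p5 := shiftedFactorial_pos (show (0 : ℝ) < 5 / 4 by norm_num) k
  have pf : (0 : ℝ) < k.factorial := by positivity
  have h3 : shiftedFactorial (1/2) (2 * k + 1) =
      4 ^ k * (shiftedFactorial (3/4) k * shiftedFactorial (5/4) k) / 2 := by linarith
  rw [h3] at h1
  rw [hyperCoeff, div_pow]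
  generalize fallFac (3 * (k : ℝ) + 1 / 2) k = A at h1 ⊢
  field_simp
  linear_combination 2 * h1

lemma hyperCoeff_nonneg (k : ℕ) : 0 ≤ hyperCoeff k := by
  have h (x : ℝ) (hx : 0 < x) := (shiftedFactorial_pos hx k).le
  have := h (1/2) (by norm_num)
  have := h (1/6) (by norm_num)
  have := h (5/6) (by norm_num)
  have := h (3/4) (by norm_num)
  have := h (5/4) (by norm_num)
  unfold hyperCoeff
  positivity

lemma shiftedFactorial_mono {x y : ℝ} (hx : 0 < x) (hxy : x ≤ y) (n : ℕ) :
    shiftedFactorial x n ≤ shiftedFactorial y n :=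
  prod_le_prod (fun _ _ => by positivity) fun _ _ => by linarith

lemma shiftedFactorial_one (n : ℕ) : shiftedFactorial 1 n = n.factorial := by
  induction n with
  | zero => simp [shiftedFactorial]
  | succ n ih => rw [shiftedFactorial_succ, ih, Nat.factorial_succ]; push_cast; ring

lemma hyperCoeff_le_one (k : ℕ) : hyperCoeff k ≤ 1 := by
  have p (x : ℝ) (hx : 0 < x) := shiftedFactorial_pos hx k
  have h1 := p (1/2) (by norm_num)
  have h2 := p (1/6) (by norm_num)
  have h3 := p (5/6) (by norm_num)
  have h4 := p (3/4) (by norm_num)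
  have h5 := p (5/4) (by norm_num)
  have a1 := shiftedFactorial_mono (show (0 : ℝ) < 1/2 by norm_num) (show 1/2 ≤ 3/4 by norm_num) k
  have a2 := shiftedFactorial_mono (show (0 : ℝ) < 1/6 by norm_num) (show 1/6 ≤ 1 by norm_num) k
  have a3 := shiftedFactorial_mono (show (0 : ℝ) < 5/6 by norm_num) (show 5/6 ≤ 5/4 by norm_num) k
  rw [shiftedFactorial_one] at a2
  unfold hyperCoeff
  rw [div_le_one (by positivity), mul_comm (k.factorial : ℝ)]
  gcongr

lemma ringChoose_eq_fallFac (x : ℝ) (n : ℕ) : Ring.choose x n = fallFac x n / n.factorial := by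
  have h : ∀ n : ℕ, (descPochhammer ℤ n).smeval x = fallFac x n := by
    intro n
    induction n with
    | zero => simp [fallFac]
    | succ n ih =>
      rw [descPochhammer_succ_right, Polynomial.smeval_mul, ih, fallFac, fallFac, prod_range_succ]
      simp [Polynomial.smeval_sub, Polynomial.smeval_X, Polynomial.smeval_natCast]
  rw [Ring.choose_eq_smul, h, smul_eq_mul]
  field_simp

lemma hasSum_binomial (a : ℝ) {y : ℝ} (hy : |y| < 1) :
    HasSum (fun j : ℕ => fallFac a j / j.factorial * (-y) ^ j) ((1 - y) ^ a) := by
  have h := (Real.one_add_rpow_hasFPowerSeriesOnBall_zero (a := a)).hasSum (y := -y)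
    (by simpa [Metric.mem_eball, edist_dist, Real.dist_eq] using hy)
  simp only [binomialSeries_apply, ringChoose_eq_fallFac, smul_eq_mul, List.ofFn_const,
    List.prod_replicate, zero_add] at h
  rwa [← sub_eq_add_neg] at h

/-- The crude bound `|binom (2k + 1/2) j| ≤ binom (2k + j) j ≤ 2^(2k + j)`. -/
lemma abs_fallFac_le (k j : ℕ) :
    |fallFac (2 * k + 1 / 2) j / j.factorial| ≤ 2 ^ (2 * k + j) := by
  have h1 : |fallFac (2 * k + 1 / 2) j| ≤ (((2 * k + 1).ascFactorial j : ℕ) : ℝ) := by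
    rw [fallFac, abs_prod, Nat.ascFactorial_eq_prod_range]
    push_cast
    refine prod_le_prod (fun _ _ => abs_nonneg _) fun i _ => ?_
    rw [abs_le]
    have : (0 : ℝ) ≤ i := by positivity
    have : (0 : ℝ) ≤ k := by positivity
    constructor <;> linarith
  rw [Nat.ascFactorial_eq_factorial_mul_choose] at h1
  rw [abs_div, Nat.abs_cast, div_le_iff₀ (by positivity)]
  refine h1.trans ?_
  push_cast
  rw [mul_comm]
  gcongr
  exact_mod_cast Nat.choose_le_two_pow _ _

/-- The term with indices `(k, j)` of the double series obtained by expanding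
`(1 - y)^(2k + 1/2)` in the `k`-th summand. -/
noncomputable def doubleTerm (y : ℝ) (p : ℕ × ℕ) : ℝ :=
  hyperCoeff p.1 * (27 / 4 * y) ^ p.1 *
    (fallFac (2 * p.1 + 1 / 2) p.2 / p.2.factorial * (-y) ^ p.2)

lemma summable_double {y : ℝ} (hy : |y| < 1 / 27) : Summable (doubleTerm y) := by
  have g1 := summable_geometric_of_lt_one (r := 27 * |y|) (by positivity) (by linarith)
  have g2 := summable_geometric_of_lt_one (r := 2 * |y|) (by positivity) (by linarith)
  refine Summable.of_norm_bounded
    (g1.mul_of_nonneg g2 (fun _ => by positivity) (fun _ => by positivity)) ?_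
  rintro ⟨k, j⟩
  simp only [doubleTerm, Real.norm_eq_abs]
  rw [abs_mul, abs_mul, abs_mul, abs_of_nonneg (hyperCoeff_nonneg k), abs_pow, abs_pow, abs_neg,
    abs_mul, abs_of_pos (show (0 : ℝ) < 27 / 4 by norm_num)]
  calc hyperCoeff k * (27 / 4 * |y|) ^ k *
        (|fallFac (2 * k + 1 / 2) j / j.factorial| * |y| ^ j)
      ≤ 1 * (27 / 4 * |y|) ^ k * (2 ^ (2 * k + j) * |y| ^ j) := by
        gcongr
        · exact hyperCoeff_le_one k
        · exact abs_fallFac_le k j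
    _ = (27 * |y|) ^ k * (2 * |y|) ^ j := by
        rw [pow_add, pow_mul, show (27 : ℝ) * |y| = 27 / 4 * |y| * 2 ^ 2 by ring, mul_pow _ (2 ^ 2),
          mul_pow 2 |y|]
        ring

/-- A term of the double series with `k + j = n`, `n = m + 1`, written as a constant times a term of
an `n`-th finite difference. The product is `fallFac (3k + 1/2) n / (3k + 1/2)`. -/
lemma doubleTerm_eq (y : ℝ) (k m j : ℕ) (h : k + j = m + 1) :
    doubleTerm y (k, j) = y ^ (m + 1) / (2 * (m + 1).factorial) *
      ((-1) ^ j * (m + 1).choose k * ∏ i ∈ range m, (3 * (k : ℝ) - 1 / 2 - i)) := by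
  have hf := fallFac_add (3 * k + 1 / 2) k j
  rw [h, show (3 * (k : ℝ) + 1 / 2 - k) = 2 * k + 1 / 2 by ring, add_comm m 1, fallFac_add,
    show fallFac (3 * (k : ℝ) + 1 / 2) 1 = 3 * k + 1 / 2 by simp [fallFac]] at hf
  have hprod : fallFac (3 * (k : ℝ) + 1 / 2 - (1 : ℕ)) m =
      ∏ i ∈ range m, (3 * (k : ℝ) - 1 / 2 - i) := by
    refine prod_congr rfl fun i _ => ?_
    push_cast
    ring
  rw [hprod] at hf
  have hc := hyperCoeff_mul_pow k
  have hn : ((m + 1).choose k : ℝ) * k.factorial * j.factorial = (m + 1).factorial := by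
    rw [← h]
    have := Nat.choose_mul_factorial_mul_factorial (show k ≤ k + j by omega)
    rw [Nat.add_sub_cancel_left] at this
    exact_mod_cast this
  have p0 : (3 * (k : ℝ) + 1 / 2) ≠ 0 := by positivity
  have pk : (k.factorial : ℝ) ≠ 0 := by positivity
  have pj : (j.factorial : ℝ) ≠ 0 := by positivity
  have pc : ((m + 1).choose k : ℝ) ≠ 0 := by
    have := Nat.choose_pos (show k ≤ m + 1 by omega)
    positivity
  have hc' : hyperCoeff k * (27 / 4) ^ k =
      1 / 2 * fallFac (3 * k + 1 / 2) k / ((3 * k + 1 / 2) * k.factorial) := by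
    rw [eq_div_iff (by positivity), hc]
  have hP : ∏ i ∈ range m, (3 * (k : ℝ) - 1 / 2 - i) =
      fallFac (3 * k + 1 / 2) k * fallFac (2 * k + 1 / 2) j / (3 * k + 1 / 2) := by
    rw [eq_div_iff p0, ← hf, mul_comm]
  rw [← hn, hP, ← h, doubleTerm]
  simp only
  rw [mul_pow, ← mul_assoc (hyperCoeff k), hc', neg_pow y, pow_add, h]
  generalize fallFac (3 * (k : ℝ) + 1 / 2) k = A
  generalize fallFac (2 * (k : ℝ) + 1 / 2) j = B
  generalize (3 * (k : ℝ) + 1 / 2) = C at *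
  field_simp

lemma sum_antidiagonal_coeff (y : ℝ) (n : ℕ) :
    ∑ p ∈ antidiagonal n, doubleTerm y p = if n = 0 then 1 else 0 := by
  rcases n with _ | m
  · simp [doubleTerm, hyperCoeff, fallFac, shiftedFactorial]
  rw [if_neg (by omega)]
  let P : Polynomial ℝ :=
    ∏ i ∈ range m, (Polynomial.C 3 * Polynomial.X + Polynomial.C (-(1 / 2) - (i : ℝ)))
  have hdeg : P.natDegree < m + 1 := by
    refine Nat.lt_succ_of_le ((Polynomial.natDegree_prod_le _ _).trans ?_)
    refine (sum_le_card_nsmul _ _ 1 fun i _ => ?_).trans (by simp)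
    exact Polynomial.natDegree_linear_le
  have h0 := congrFun (Polynomial.fwdDiff_iter_eq_zero_of_degree_lt hdeg) 0
  rw [fwdDiff_iter_eq_sum_shift] at h0
  rw [Nat.sum_antidiagonal_eq_sum_range_succ_mk]
  calc ∑ k ∈ range (m + 1).succ, doubleTerm y (k, m + 1 - k)
      = y ^ (m + 1) / (2 * (m + 1).factorial) * ∑ k ∈ range (m + 1 + 1),
          ((-1 : ℤ) ^ (m + 1 - k) * (m + 1).choose k) • P.eval (0 + k • (1 : ℝ)) := by
        rw [mul_sum]
        refine sum_congr rfl fun k hk => ?_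
        have hk := mem_range.1 hk
        rw [doubleTerm_eq y k m (m + 1 - k) (by omega)]
        congr 1
        rw [zsmul_eq_mul, Polynomial.eval_prod]
        push_cast
        congr 1
        refine prod_congr rfl fun i _ => ?_
        simp
        ring
    _ = 0 := by rw [h0]; simp

/-- The half power of the Fuss–Catalan generating function, parametrised by
`w = y (1 - y)^2`. -/
lemma hasSum_hyperCoeff {y : ℝ} (hy : |y| < 1 / 27) :
    HasSum (fun k : ℕ => hyperCoeff k * (27 / 4 * y * (1 - y) ^ 2) ^ k) (1 / √(1 - y)) := by
  have hy1 : 0 < 1 - y := by linarith [(abs_lt.1 hy).2]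
  have hs := summable_double hy
  have htot : HasSum (doubleTerm y) 1 := by
    have h2 := (Finset.HasAntidiagonal.sigmaAntidiagonalEquivProd (A := ℕ)).hasSum_iff.2 hs.hasSum
    have h3 := h2.sigma (g := fun n => if n = 0 then 1 else 0) fun n => by
      rw [← sum_antidiagonal_coeff y n, ← Finset.sum_coe_sort]
      exact hasSum_fintype _
    rw [← h3.unique (hasSum_ite_eq 0 1)]
    exact hs.hasSum
  have hrow (k : ℕ) : HasSum (fun j => doubleTerm y (k, j))
      (hyperCoeff k * (27 / 4 * y) ^ k * (1 - y) ^ (2 * k + 1 / 2 : ℝ)) :=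
    (hasSum_binomial _ (by linarith)).mul_left _
  have h := (htot.prod_fiberwise hrow).div_const (√(1 - y))
  refine h.congr_fun ?_
  intro k
  have hsq : √(1 - y) ≠ 0 := (Real.sqrt_pos.2 hy1).ne'
  rw [Real.rpow_add hy1, ← Real.sqrt_eq_rpow, eq_div_iff hsq, mul_pow _ ((1 - y) ^ 2), ← pow_mul,
    ← Real.rpow_natCast (1 - y) (2 * k)]
  push_cast
  ring

theorem sqrt_two_series_c :
    Summable (fun k : ℕ => shiftedFactorial (1/2) k * shiftedFactorial (1/6) k * shiftedFactorial (5/6) k / ((Nat.factorial k : ℝ) * shiftedFactorial (3/4) k * shiftedFactorial (5/4) k) * (748177108992 / 36902422678601089 : ℝ) ^ k) ∧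
    Real.sqrt 2 = (816 / 577 : ℝ) *
      ∑' k : ℕ, shiftedFactorial (1/2) k * shiftedFactorial (1/6) k * shiftedFactorial (5/6) k / ((Nat.factorial k : ℝ) * shiftedFactorial (3/4) k * shiftedFactorial (5/4) k) * (748177108992 / 36902422678601089 : ℝ) ^ k := by
  have h := hasSum_hyperCoeff (y := 1 / 332929) (by rw [abs_of_pos] <;> norm_num)
  rw [show (27 / 4 * (1 / 332929) * (1 - 1 / 332929) ^ 2 : ℝ) =
    748177108992 / 36902422678601089 by norm_num] at h
  simp only [hyperCoeff] at h
  refine ⟨h.summable, ?_⟩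
  rw [h.tsum_eq, show (1 - 1 / 332929 : ℝ) = (408 / 577) ^ 2 * 2 by norm_num,
    Real.sqrt_mul (by norm_num), Real.sqrt_sq (by norm_num)]
  have h2 : √(2 : ℝ) ≠ 0 := by positivity
  field_simp
  norm_num
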